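/- (Theorem 4.3, first identity.) In U(gl(m,ℂ)), for every q ≥ 0 and all 1 ≤ k,l ≤ m, Σ_{p=0}^q binom(q,p)·(−m)^{q−p}·ẽ_{kl}^p = (−1)^q · Σ_{p=0}^q K_{q−p}(−c)·e_{lk}^p (note the transposed indices l,k on the right-hand side). -/

import Mathlib

open Finset

attribute [local instance 100] LieRing.ofAssociativeRing

/-- `gl(m, ℂ)`: the Lie algebra of `m × m` complex matrices. -/
abbrev glm (m : ℕ) := Matrix (Fin m) (Fin m) ℂ

/-- The universal enveloping algebra `U(gl(m,ℂ))`. -/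
abbrev UEA (m : ℕ) := UniversalEnvelopingAlgebra ℂ (glm m)

/-- The image of the matrix unit `e_{kl}` in `U(gl(m,ℂ))`. -/
noncomputable def E {m : ℕ} (k l : Fin m) : UEA m :=
  UniversalEnvelopingAlgebra.ι ℂ (Matrix.single k l (1 : ℂ))

/-- `e_{kl}^q`, defined by `e_{kl}^0 = δ_{kl}` and `e_{kl}^{q+1} = Σ_i e_{ki} e_{il}^q`. -/
noncomputable def Epow {m : ℕ} : ℕ → Fin m → Fin m → UEA m
  | 0, k, l => if k = l then 1 else 0
  | q + 1, k, l => ∑ i, E k i * Epow q i l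

/-- `ẽ_{kl}^q`, defined by `ẽ_{kl}^0 = δ_{kl}` and `ẽ_{kl}^{q+1} = −Σ_i e_{ik} ẽ_{il}^q`. -/
noncomputable def Etil {m : ℕ} : ℕ → Fin m → Fin m → UEA m
  | 0, k, l => if k = l then 1 else 0
  | q + 1, k, l => -∑ i, E i k * Etil q i l

/-- The Casimir element `c_q = Σ_k e_{kk}^q`. -/
noncomputable def Cas (m : ℕ) (q : ℕ) : UEA m := ∑ k : Fin m, Epow q k k

/-- The Casimir element `c̃_q = Σ_k ẽ_{kk}^q`. -/
noncomputable def CasT (m : ℕ) (q : ℕ) : UEA m := ∑ k : Fin m, Etil q k k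

/-- `K_n(−c) ∈ U(gl(m,ℂ))`: `K_0(−c) = 1` and `K_n(−c) = Σ_{p=0}^{n−1} K_p(−c)·c_{n−1−p}`. -/
noncomputable def Kc (m : ℕ) : ℕ → UEA m
  | 0 => 1
  | n + 1 => ∑ p ∈ (Finset.range (n + 1)).attach, Kc m p.1 * Cas m (n - p.1)
  decreasing_by exact Finset.mem_range.mp p.2

theorem E_comm {m : ℕ} (i j k l : Fin m) :
    E i j * E k l = E k l * E i j + ((if j = k then E i l else 0) - (if i = l then E k j else 0)) := by
  have h : UniversalEnvelopingAlgebra.ι ℂ ⁅(Matrix.single i j (1 : ℂ) : glm m), Matrix.single k l (1 : ℂ)⁆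
      = ⁅(E i j : UEA m), E k l⁆ := LieHom.map_lie _ _ _
  rw [LieRing.of_associative_ring_bracket, LieRing.of_associative_ring_bracket] at h
  rw [← sub_eq_iff_eq_add', ← h, map_sub]
  congr 1
  · by_cases hjk : j = k
    · subst hjk; simp [E]
    · simp [hjk]
  · by_cases hil : i = l
    · subst hil; simp [E]
    · simp [hil, Ne.symm hil]

theorem E_Epow {m : ℕ} (p : ℕ) : ∀ i j k l : Fin m,
    E i j * Epow p k l = Epow p k l * E i j
      + ((if j = k then Epow p i l else 0) - (if i = l then Epow p k j else 0)) := by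
  induction p with
  | zero =>
    intro i j k l
    simp only [Epow]
    by_cases h1 : k = l <;> by_cases h2 : j = k <;> by_cases h3 : i = l <;>
      simp [h1, h2, h3, eq_comm (a := k) (b := j), eq_comm (a := l) (b := j)]
  | succ p ih =>
    intro i j k l
    have key : ∀ a : Fin m, E i j * (E k a * Epow p a l) =
        E k a * Epow p a l * E i j
        + (((if j = k then E i a * Epow p a l else 0) - (if i = a then E k j * Epow p a l else 0))
         + ((if j = a then E k a * Epow p i l else 0) - (if i = l then E k a * Epow p a j else 0))) := by
      intro a
      rw [← mul_assoc, E_comm i j k a, add_mul, mul_assoc, ih i j a l, mul_add, mul_sub, sub_mul]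
      simp only [mul_ite, ite_mul, mul_zero, zero_mul, mul_assoc]
      abel
    simp only [Epow, Finset.mul_sum, key, Finset.sum_add_distrib, Finset.sum_sub_distrib,
      Finset.sum_mul, Finset.sum_ite_eq, Finset.mem_univ, if_true]
    split_ifs <;> simp <;> abel

theorem Epow_succ' {m : ℕ} (p : ℕ) : ∀ k l : Fin m,
    ∑ i, Epow p k i * E i l = Epow (p + 1) k l := by
  induction p with
  | zero => intro k l; simp [Epow]
  | succ p ih =>
    intro k l
    have h : Epow (p + 1 + 1) k l = ∑ a, E k a * Epow (p + 1) a l := by rw [Epow]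
    have h' : ∀ i, Epow (p + 1) k i = ∑ a, E k a * Epow p a i := fun i => by rw [Epow]
    simp only [h, h', ← ih, Finset.mul_sum, Finset.sum_mul, mul_assoc]
    rw [Finset.sum_comm]

theorem Cas_comm {m : ℕ} (p : ℕ) (i j : Fin m) : Commute (E i j) (Cas m p) := by
  unfold Commute SemiconjBy Cas
  simp [Finset.mul_sum, Finset.sum_mul, E_Epow, Finset.sum_add_distrib, Finset.sum_sub_distrib]

theorem Kc_succ (m n : ℕ) :
    Kc m (n + 1) = ∑ p ∈ Finset.range (n + 1), Kc m p * Cas m (n - p) := by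
  rw [Kc, Finset.sum_attach (Finset.range (n + 1)) (fun p => Kc m p * Cas m (n - p))]

theorem Kc_comm {m : ℕ} (n : ℕ) (i j : Fin m) : Commute (E i j) (Kc m n) := by
  induction n using Nat.strong_induction_on with
  | _ n ih =>
    cases n with
    | zero => rw [Kc]; exact Commute.one_right _
    | succ n =>
      rw [Kc_succ]
      exact Commute.sum_right _ _ _ fun p hp =>
        (ih p (Finset.mem_range.mp hp)).mul_right (Cas_comm _ _ _)

theorem sum_E_Epow {m : ℕ} (p : ℕ) (k l : Fin m) :
    ∑ i, E i k * Epow p l i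
      = Epow (p + 1) l k + (if k = l then Cas m p else 0) - (m : ℂ) • Epow p l k := by
  simp only [E_Epow, Finset.sum_add_distrib, Finset.sum_sub_distrib, Epow_succ', if_true]
  split_ifs <;> simp [Cas, add_sub_assoc, ← Nat.cast_smul_eq_nsmul ℂ, ← sub_eq_add_neg]

/-- The right-hand sum. -/
noncomputable def Rsum (m q : ℕ) (k l : Fin m) : UEA m :=
  ∑ p ∈ Finset.range (q + 1), Kc m (q - p) * Epow p l k

theorem Rsum_succ (m q : ℕ) (k l : Fin m) :
    Rsum m (q + 1) k l = ∑ i, E i k * Rsum m q i l + (m : ℂ) • Rsum m q k l := by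
  have h1 : ∑ i, E i k * Rsum m q i l
      = ∑ p ∈ Finset.range (q + 1), Kc m (q - p) * ∑ i, E i k * Epow p l i := by
    simp only [Rsum, Finset.mul_sum]
    rw [Finset.sum_comm]
    refine Finset.sum_congr rfl fun p _ => Finset.sum_congr rfl fun i _ => ?_
    rw [← mul_assoc, (Kc_comm _ _ _).eq, mul_assoc]
  rw [h1]
  simp only [sum_E_Epow, mul_sub, mul_add, Finset.sum_sub_distrib, Finset.sum_add_distrib,
    mul_smul_comm, ← Finset.smul_sum]
  rw [← Rsum, sub_add_cancel, Rsum, Finset.sum_range_succ']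
  congr 1
  · refine Finset.sum_congr rfl fun p _ => ?_
    rw [Nat.add_sub_add_right]
  · rw [Nat.sub_zero, Kc_succ, ← Finset.sum_range_reflect, Epow]
    by_cases h : k = l
    · subst h
      simp only [if_true, mul_one]
      refine Finset.sum_congr rfl fun p hp => ?_
      have := Finset.mem_range.mp hp
      congr 2 <;> omega
    · simp [h, Ne.symm h]

/-- The left-hand sum. -/
noncomputable def Lsum (m q : ℕ) (k l : Fin m) : UEA m :=
  ∑ p ∈ Finset.range (q + 1), ((q.choose p : ℂ) * (-(m : ℂ)) ^ (q - p)) • Etil p k l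

theorem Lsum_succ (m q : ℕ) (k l : Fin m) :
    Lsum m (q + 1) k l = -∑ i, E i k * Lsum m q i l - (m : ℂ) • Lsum m q k l := by
  have h1 : -∑ i, E i k * Lsum m q i l
      = ∑ p ∈ Finset.range (q + 1),
          ((q.choose p : ℂ) * (-(m : ℂ)) ^ (q - p)) • Etil (p + 1) k l := by
    simp only [Lsum, Finset.mul_sum, mul_smul_comm, Etil, smul_neg, Finset.sum_neg_distrib,
      Finset.smul_sum]
    rw [Finset.sum_comm]
  have h2 : -((m : ℂ) • Lsum m q k l) = ∑ p ∈ Finset.range (q + 1),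
      ((q.choose (p + 1) : ℂ) * (-(m : ℂ)) ^ (q - p)) • Etil (p + 1) k l
        + ((-(m : ℂ)) ^ (q + 1)) • Etil 0 k l := by
    rw [Finset.sum_range_succ, Lsum, Finset.sum_range_succ', smul_add, Finset.smul_sum, neg_add,
      ← Finset.sum_neg_distrib]
    simp only [Nat.choose_succ_self, Nat.cast_zero, zero_mul, zero_smul, add_zero]
    congr 1
    · refine Finset.sum_congr rfl fun p hp => ?_
      have hp := Finset.mem_range.mp hp
      obtain ⟨r, rfl⟩ : ∃ r, q = p + 1 + r := ⟨q - (p + 1), by omega⟩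
      rw [show p + 1 + r - p = r + 1 by omega, show p + 1 + r - (p + 1) = r by omega,
        smul_smul, ← neg_smul]
      congr 1
      ring
    · rw [smul_smul, ← neg_smul]
      congr 1
      simp
      ring
  rw [sub_eq_add_neg, h1, h2, ← add_assoc, ← Finset.sum_add_distrib, Lsum, Finset.sum_range_succ']
  congr 1
  · refine Finset.sum_congr rfl fun p _ => ?_
    rw [← add_smul, Nat.choose_succ_succ, Nat.add_sub_add_right, Nat.cast_add, add_mul]
  · simp

/-- Theorem 4.3, first identity:
`Σ_{p=0}^q C(q,p) (−m)^{q−p} ẽ_{kl}^p = (−1)^q Σ_{p=0}^q K_{q−p}(−c) e_{lk}^p`. -/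
theorem statement12 (m : ℕ) (hm : 1 ≤ m) (q : ℕ) (k l : Fin m) :
    ∑ p ∈ Finset.range (q + 1), ((q.choose p : ℂ) * (-(m : ℂ)) ^ (q - p)) • Etil p k l
      = (-1 : ℂ) ^ q • ∑ p ∈ Finset.range (q + 1), Kc m (q - p) * Epow p l k := by
  change Lsum m q k l = (-1 : ℂ) ^ q • Rsum m q k l
  induction q generalizing k with
  | zero => simp [Lsum, Rsum, Etil, Epow, Kc, eq_comm]
  | succ q ih =>
    rw [Lsum_succ, Rsum_succ]
    simp only [ih, mul_smul_comm, ← Finset.smul_sum]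
    rw [pow_succ, mul_neg_one, neg_smul, smul_add, neg_add, smul_comm (m : ℂ), sub_eq_add_neg]
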